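/- Let (X,d_X) and (Y,d_Y) be metric spaces, p ∈ X, q ∈ Y, R > 0, and Φ : B_R(q) → X a map with Φ(q) = p such that (a) d_X(p, Φ(y)) = d_Y(q, y) for every y ∈ B_R(q), and (b) d_X(Φ(y), Φ(y')) ≥ d_Y(y, y') for every y, y' ∈ B_R(q). If there are L ∈ ℕ and 0 < ε < π/2 such that p satisfies the ATB(ε) condition with constants L and R, then q also satisfies the ATB(ε) condition with constants L and R. -/

import Mathlib

/-- The Euclidean comparison angle `∠̃ x p y`. -/
noncomputable def compAngle {X : Type*} [MetricSpace X] (p x y : X) : ℝ :=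
  Real.arccos ((dist x p ^ 2 + dist y p ^ 2 - dist x y ^ 2) / (2 * dist x p * dist y p))

/-- The point `p` satisfies the `ATB(ε)` condition with constants `L` and `R`. -/
def ATBPoint {X : Type*} [MetricSpace X] (ε : ℝ) (p : X) (L : ℕ) (R : ℝ) : Prop :=
  ∀ y : Fin L → X, (∀ i, y i ∈ Metric.ball p R ∧ y i ≠ p) →
    ∃ i j, i ≠ j ∧ compAngle p (y i) (y j) < ε

section

variable {X Y : Type*} [MetricSpace X] [MetricSpace Y]

-- If `x = p` or `y = p`, both angles are `arccos 0`, because `a / 0 = 0`.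
theorem compAngle_le_compAngle {p x y : X} {q x' y' : Y} (hx : dist x p = dist x' q)
    (hy : dist y p = dist y' q) (hxy : dist x y ≤ dist x' y') :
    compAngle p x y ≤ compAngle q x' y' := by
  unfold compAngle
  rw [hx, hy]
  apply Real.arccos_le_arccos
  gcongr

theorem atb_transfer_simple_general {q : Y} {R : ℝ} {Φ : Y → X}
    (hradial : ∀ y ∈ Metric.ball q R, dist (Φ q) (Φ y) = dist q y)
    (hexpand : ∀ y ∈ Metric.ball q R, ∀ y' ∈ Metric.ball q R, dist y y' ≤ dist (Φ y) (Φ y'))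
    {L : ℕ} {ε : ℝ} (hATB : ATBPoint ε (Φ q) L R) :
    ATBPoint ε q L R := by
  intro y hy
  have hdist (i : Fin L) : dist (y i) q = dist (Φ (y i)) (Φ q) := by
    rw [dist_comm, ← hradial _ (hy i).1, dist_comm]
  have hΦy (i : Fin L) : Φ (y i) ∈ Metric.ball (Φ q) R ∧ Φ (y i) ≠ Φ q := by
    rw [Metric.mem_ball, ← dist_pos, ← hdist, dist_pos]
    exact hy i
  obtain ⟨i, j, hij, hangle⟩ := hATB (Φ ∘ y) hΦy
  have hle : compAngle q (y i) (y j) ≤ compAngle (Φ q) (Φ (y i)) (Φ (y j)) :=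
    compAngle_le_compAngle (hdist i) (hdist j) (hexpand _ (hy i).1 _ (hy j).1)
  exact ⟨i, j, hij, hle.trans_lt hangle⟩

end

/-- The simple lifting lemma: if `Φ : B_R(q) → X` preserves distances to the center
and does not decrease mutual distances, then the `ATB(ε)` condition transfers from
`p = Φ(q)` to `q`. -/
theorem atb_transfer_simple
    {X Y : Type*} [MetricSpace X] [MetricSpace Y]
    (p : X) (q : Y) (R : ℝ) (hR : 0 < R) (Φ : Y → X) (hΦq : Φ q = p)
    (ha : ∀ y ∈ Metric.ball q R, dist p (Φ y) = dist q y)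
    (hb : ∀ y ∈ Metric.ball q R, ∀ y' ∈ Metric.ball q R,
      dist y y' ≤ dist (Φ y) (Φ y'))
    (L : ℕ) (ε : ℝ) (hε0 : 0 < ε) (hε : ε < Real.pi / 2)
    (hATB : ATBPoint ε p L R) :
    ATBPoint ε q L R := by
  subst hΦq
  exact atb_transfer_simple_general ha hb hATB
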